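/- Let L > 0, ω ∈ ℝ, ρ ∈ ℝ, and define p₀ : ℝ² → ℝ by the double series p₀(x,y) = ρ · Σ_{(j,k) ∈ ℕ×ℕ} (−32ω²/((2j+1)(2k+1)π²)) / ( ((2k+1)π/L)² + ((2j+1)π/L)² ) · sin((2j+1)π(x + L/2)/L) · sin((2k+1)π(y + L/2)/L). Then for every (x,y) in the open square (−L/2, L/2) × (−L/2, L/2), p₀ is twice differentiable at (x,y) and its Laplacian satisfies ∂²p₀/∂x² (x,y) + ∂²p₀/∂y² (x,y) = 2ρω². -/

import Mathlib

open Real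

/-- Initial pressure of the rotating square patch benchmark, as a function on `ℝ × ℝ`,
given by a double odd-sine series. -/
noncomputable def squarePatchPressure (L ω ρ : ℝ) (z : ℝ × ℝ) : ℝ :=
  ρ * ∑' jk : ℕ × ℕ,
    (-32 * ω ^ 2 / ((2 * (jk.1 : ℝ) + 1) * (2 * (jk.2 : ℝ) + 1) * π ^ 2))
      / (((2 * (jk.2 : ℝ) + 1) * π / L) ^ 2 + ((2 * (jk.1 : ℝ) + 1) * π / L) ^ 2)
      * Real.sin ((2 * (jk.1 : ℝ) + 1) * π * (z.1 + L / 2) / L)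
      * Real.sin ((2 * (jk.2 : ℝ) + 1) * π * (z.2 + L / 2) / L)

theorem sp_deriv (F : ℂ → ℂ) (L a B x y : ℝ) (p : ℝ × ℝ → ℝ) (U : Set (ℝ × ℝ)) (hU : IsOpen U)
    (hxy : (x, y) ∈ U) (hL : L ≠ 0)
    (V : Set ℂ) (hV : IsOpen V) (hF : DifferentiableOn ℂ F V)
    (hUV : ∀ z ∈ U, (((z.1 + L / 2) / L : ℝ) : ℂ) + ((z.2 / L : ℝ) : ℂ) * Complex.I ∈ V)
    (hp : ∀ z ∈ U, p z = a * (L ^ 2 / 4 - z.1 ^ 2) +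
      B * (F ((((z.1 + L / 2) / L : ℝ) : ℂ) + ((z.2 / L : ℝ) : ℂ) * Complex.I)).re) :
    DifferentiableAt ℝ p (x, y) ∧ DifferentiableAt ℝ (fderiv ℝ p) (x, y) ∧
    fderiv ℝ (fun z => fderiv ℝ p z (1, 0)) (x, y) (1, 0)
      + fderiv ℝ (fun z => fderiv ℝ p z (0, 1)) (x, y) (0, 1) = - 2 * a := by
  set w : ℝ × ℝ → ℂ := fun z => (((z.1 + L / 2) / L : ℝ) : ℂ) + ((z.2 / L : ℝ) : ℂ) * Complex.I
    with hw
  let l : ℝ × ℝ →L[ℝ] ℂ := (ContinuousLinearMap.fst ℝ ℝ ℝ).smulRight ((L : ℂ)⁻¹) +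
    (ContinuousLinearMap.snd ℝ ℝ ℝ).smulRight ((L : ℂ)⁻¹ * Complex.I)
  have hwd : ∀ z, HasFDerivAt w l z := by
    intro z
    have h1 : w = fun z => l z + 1 / 2 := by
      funext z
      have : (L : ℂ) ≠ 0 := by exact_mod_cast hL
      simp [hw, l]
      field_simp
      ring
    rw [h1]
    exact l.hasFDerivAt.add_const _
  have hcomp : ∀ G : ℂ → ℂ, DifferentiableOn ℂ G V → ∀ z ∈ U,
      HasFDerivAt (fun z => G (w z)) ((deriv G (w z)) • l) z := by
    intro G hG z hz
    have h1 := (hG.differentiableAt (hV.mem_nhds (hUV z hz))).hasDerivAt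
    exact h1.comp_hasFDerivAt z (hwd z)
  have hF' : DifferentiableOn ℂ (deriv F) V := hF.deriv hV
  let q : ℝ × ℝ → (ℝ × ℝ →L[ℝ] ℝ) := fun z => (-2 * a * z.1) • (ContinuousLinearMap.fst ℝ ℝ ℝ) +
    B • Complex.reCLM.comp ((deriv F (w z)) • l)
  have hpd : ∀ z ∈ U, HasFDerivAt p (q z) z := by
    intro z hz
    have h1 : HasFDerivAt (fun z : ℝ × ℝ => a * (L ^ 2 / 4 - z.1 ^ 2))
       ((-2 * a * z.1) • (ContinuousLinearMap.fst ℝ ℝ ℝ)) z := by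
      have h := ((hasFDerivAt_fst (𝕜 := ℝ) (p := z)).pow 2).const_sub (L ^ 2 / 4) |>.const_mul a
      refine h.congr_fderiv ?_
      ext <;> simp
      ring
    have h2 := (Complex.reCLM.hasFDerivAt.comp z (hcomp F hF z hz)).const_mul B
    refine (h1.add h2).congr_of_eventuallyEq ?_
    filter_upwards [hU.mem_nhds hz] with z' hz'
    simp [hp z' hz', w]
  have hev : fderiv ℝ p =ᶠ[nhds (x, y)] q := by
    filter_upwards [hU.mem_nhds hxy] with z hz using (hpd z hz).fderiv
  have hd1 := hcomp _ hF' _ hxy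
  have hq : DifferentiableAt ℝ q (x, y) := by
    have h2 : DifferentiableAt ℝ (fun z => (deriv F (w z)) • l) (x, y) :=
      hd1.differentiableAt.smul_const l
    have h3 : DifferentiableAt ℝ (fun z => Complex.reCLM.comp ((deriv F (w z)) • l)) (x, y) :=
      (differentiableAt_const _).clm_comp h2
    have h4 : DifferentiableAt ℝ (fun z : ℝ × ℝ => (-2 * a * z.1) • (ContinuousLinearMap.fst ℝ ℝ ℝ)) (x, y) := by
      fun_prop
    exact h4.add (h3.const_smul B)
  refine ⟨(hpd _ hxy).differentiableAt, hq.congr_of_eventuallyEq hev, ?_⟩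
  have key : ∀ v : ℝ × ℝ, fderiv ℝ (fun z => fderiv ℝ p z v) (x, y) v =
      -2 * a * v.1 ^ 2 + B * (deriv (deriv F) (w (x, y)) * l v * l v).re := by
    intro v
    have he : (fun z => fderiv ℝ p z v) =ᶠ[nhds (x, y)] fun z => (-2 * a * v.1) * z.1 + B * (deriv F (w z) * l v).re := by
      filter_upwards [hev] with z hz
      rw [hz]
      simp [q]
      ring
    rw [he.fderiv_eq]
    have h1 : HasFDerivAt (fun z : ℝ × ℝ => (-2 * a * v.1) * z.1) ((-2 * a * v.1) • ContinuousLinearMap.fst ℝ ℝ ℝ) (x, y) :=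
      hasFDerivAt_fst.const_mul _
    have h2 := (Complex.reCLM.hasFDerivAt.comp (x, y) (hd1.mul_const (l v))).const_mul B
    have h3 := (h1.add h2).fderiv
    have h4 := congrArg (fun T => T v) h3
    refine Eq.trans h4 ?_
    simp
    ring
  rw [key, key]
  simp [l]
theorem sp_uniq (E E1 E2 : ℝ → ℝ) (c : ℝ) (h1 : ∀ t, HasDerivAt E (E1 t) t)
    (h2 : ∀ t, HasDerivAt E1 (E2 t) t) (h : ∀ t ∈ Set.Icc (0:ℝ) 1, E2 t = c ^ 2 * E t)
    (h0 : E 0 = 0) (h01 : E 1 = 0) (t : ℝ) (ht : t ∈ Set.Icc (0:ℝ) 1) : E t = 0 := by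
  have hc : ConvexOn ℝ (Set.Icc (0:ℝ) 1) (fun t => E t ^ 2) := by
    refine convexOn_of_hasDerivWithinAt2_nonneg (f' := fun t => 2 * E t * E1 t) (f'' := fun t => 2 * E1 t * E1 t + 2 * E t * E2 t) (convex_Icc 0 1) ?_ ?_ ?_ ?_
    · exact fun t _ => ((h1 t).pow 2).continuousAt.continuousWithinAt
    · intro t _
      have := ((h1 t).pow 2).hasDerivWithinAt (s := interior (Set.Icc (0:ℝ) 1))
      refine this.congr_deriv ?_
      simp
    · intro t _
      exact (((h1 t).const_mul 2).mul (h2 t)).hasDerivWithinAt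
    · intro t ht
      rw [h t (interior_subset ht)]
      nlinarith [sq_nonneg (E1 t), sq_nonneg (c * E t)]
  have := hc.le_max_of_mem_Icc (Set.left_mem_Icc.2 zero_le_one) (Set.right_mem_Icc.2 zero_le_one) ht
  simp [h0, h01] at this
  nlinarith [sq_nonneg (E t)]

theorem sp_odd_summable (k : ℕ) (hk : 1 < k) : Summable (fun j : ℕ => 1 / (2 * (j:ℝ) + 1) ^ k) := by
  have h := (Real.summable_one_div_nat_pow.2 hk)
  have h2 := h.comp_injective (i := fun j : ℕ => 2 * j + 1) (fun a b hab => by simpa using hab)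
  refine h2.congr ?_
  intro j
  simp

theorem sp_bern3 (x : ℝ) :
    (Polynomial.map (algebraMap ℚ ℝ) (Polynomial.bernoulli 3)).eval x
      = x ^ 3 - 3 / 2 * x ^ 2 + x / 2 := by
  have h3 : bernoulli 3 = 0 := bernoulli_eq_zero_of_odd (by decide) (by norm_num)
  simp [Polynomial.bernoulli, Finset.sum_range_succ, h3, bernoulli_one, bernoulli_two, Nat.choose]
  ring

theorem sp_cubic_all (x : ℝ) (hx : x ∈ Set.Icc (0:ℝ) 1) :
    HasSum (fun n : ℕ => 1 / (n : ℝ) ^ 3 * Real.sin (2 * π * n * x))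
      ((2 * π) ^ 3 / 12 * (x ^ 3 - 3 / 2 * x ^ 2 + x / 2)) := by
  have h := hasSum_one_div_nat_pow_mul_sin (k := 1) one_ne_zero hx
  norm_num only [sp_bern3] at h
  have e : (2 * π) ^ 3 / 12 * (x ^ 3 - 3 / 2 * x ^ 2 + x / 2) =
      1 * (2 * π) ^ 3 / 2 / 6 * (x ^ 3 - 3 / 2 * x ^ 2 + x / 2) := by ring
  rw [e]
  exact h

theorem sp_cubic (s : ℝ) (hs : s ∈ Set.Icc (0:ℝ) 1) :
    ∑' j : ℕ, Real.sin ((2 * (j:ℝ) + 1) * π * s) / (2 * (j:ℝ) + 1) ^ 3 = π ^ 3 * s * (1 - s) / 8 := by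
  have hA := sp_cubic_all (s / 2) ⟨by linarith [hs.1], by linarith [hs.2]⟩
  have hB := (sp_cubic_all s hs).mul_left (1 / 8)
  have hs1 := hA.summable.comp_injective (i := fun j : ℕ => 2 * j + 1) (fun a b hab => by simpa using hab)
  have hs2 := hA.summable.comp_injective (i := fun j : ℕ => 2 * j) (fun a b hab => by simpa using hab)
  have h : (∑' j : ℕ, 1 / ((2 * j : ℕ) : ℝ) ^ 3 * Real.sin (2 * π * (2 * j : ℕ) * (s / 2))) +
      ∑' j : ℕ, 1 / ((2 * j + 1 : ℕ) : ℝ) ^ 3 * Real.sin (2 * π * (2 * j + 1 : ℕ) * (s / 2)) =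
      (2 * π) ^ 3 / 12 * ((s / 2) ^ 3 - 3 / 2 * (s / 2) ^ 2 + (s / 2) / 2) := by
    rw [← hA.tsum_eq]
    exact tsum_even_add_odd (f := fun n : ℕ => 1 / (n : ℝ) ^ 3 * Real.sin (2 * π * n * (s / 2))) hs2 hs1
  have e1 : ∑' j : ℕ, 1 / ((2 * j : ℕ) : ℝ) ^ 3 * Real.sin (2 * π * (2 * j : ℕ) * (s / 2)) =
      1 / 8 * ((2 * π) ^ 3 / 12 * (s ^ 3 - 3 / 2 * s ^ 2 + s / 2)) := by
    rw [← hB.tsum_eq]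
    refine tsum_congr fun j => ?_
    push_cast
    rw [show 2 * π * (2 * (j:ℝ)) * (s / 2) = 2 * π * j * s by ring, mul_pow, ← mul_assoc]
    congr 1
    rw [one_div_mul_one_div]
    norm_num
  have e2 : ∑' j : ℕ, Real.sin ((2 * (j:ℝ) + 1) * π * s) / (2 * (j:ℝ) + 1) ^ 3 =
      ∑' j : ℕ, 1 / ((2 * j + 1 : ℕ) : ℝ) ^ 3 * Real.sin (2 * π * (2 * j + 1 : ℕ) * (s / 2)) := by
    refine tsum_congr fun j => ?_
    push_cast
    rw [show 2 * π * (2 * (j:ℝ) + 1) * (s / 2) = (2 * (j:ℝ) + 1) * π * s by ring]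
    ring
  rw [e2]
  rw [e1] at h
  rw [eq_sub_of_add_eq' h]
  ring

/-- summability of bounded numerators -/
theorem sp_summ (m : ℝ) (k : ℕ) (f : ℕ → ℝ) (C : ℝ) (hf : ∀ j, |f j| ≤ C) :
    Summable fun j : ℕ => f j / ((2 * (j:ℝ) + 1) ^ (k + 1) * ((2 * (j:ℝ) + 1) ^ 2 + m ^ 2)) := by
  refine Summable.of_norm_bounded (g := fun j : ℕ => C * (1 / (2 * (j:ℝ) + 1) ^ 2)) ((sp_odd_summable 2 (by norm_num)).mul_left C) ?_
  intro j
  have hb : (1:ℝ) ≤ 2 * (j:ℝ) + 1 := by linarith [(Nat.cast_nonneg j : (0:ℝ) ≤ j)]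
  have hC : 0 ≤ C := (abs_nonneg _).trans (hf j)
  rw [Real.norm_eq_abs, abs_div, mul_one_div]
  have hp : (1:ℝ) ≤ (2 * (j:ℝ) + 1) ^ (k + 1) := one_le_pow₀ hb
  have hle : (2 * (j:ℝ) + 1) ^ 2 ≤ (2 * (j:ℝ) + 1) ^ (k + 1) * ((2 * (j:ℝ) + 1) ^ 2 + m ^ 2) := by
    nlinarith [sq_nonneg m, sq_nonneg (2 * (j:ℝ) + 1)]
  rw [abs_of_pos (lt_of_lt_of_le (by positivity) hle)]
  gcongr
  exact hf j

theorem sp_h (m : ℝ) (hm : 0 < m) (t : ℝ) (ht : t ∈ Set.Icc (0:ℝ) 1) :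
    ∑' j : ℕ, Real.sin ((2 * (j:ℝ) + 1) * π * t) / ((2 * (j:ℝ) + 1) * ((2 * (j:ℝ) + 1) ^ 2 + m ^ 2))
      = π / (4 * m ^ 2) * (1 - Real.cosh (m * π * (t - 1 / 2)) / Real.cosh (m * π / 2)) := by
  have hb : ∀ j : ℕ, (0:ℝ) < 2 * (j:ℝ) + 1 := fun j => by positivity
  set h : ℝ → ℝ := fun t => ∑' j : ℕ, Real.sin ((2 * (j:ℝ) + 1) * π * t) /
    ((2 * (j:ℝ) + 1) * ((2 * (j:ℝ) + 1) ^ 2 + m ^ 2)) with hh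
  set k : ℝ → ℝ := fun t => ∑' j : ℕ, Real.sin ((2 * (j:ℝ) + 1) * π * t) /
    ((2 * (j:ℝ) + 1) ^ 3 * ((2 * (j:ℝ) + 1) ^ 2 + m ^ 2)) with hk
  set k1 : ℝ → ℝ := fun t => ∑' j : ℕ, (π * Real.cos ((2 * (j:ℝ) + 1) * π * t)) /
    ((2 * (j:ℝ) + 1) ^ 2 * ((2 * (j:ℝ) + 1) ^ 2 + m ^ 2)) with hk1
  have hlin : ∀ (j : ℕ) (t : ℝ), HasDerivAt (fun t => (2 * (j:ℝ) + 1) * π * t) ((2 * (j:ℝ) + 1) * π) t := by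
    intro j t
    simpa using (hasDerivAt_id t).const_mul ((2 * (j:ℝ) + 1) * π)
  have hpi := Real.pi_pos
  have habsS : ∀ j : ℕ, |(fun _ => π : ℕ → ℝ) j| ≤ π := fun j => by simp [abs_of_pos hpi]
  have hd1 : ∀ t, HasDerivAt k (k1 t) t := by
    intro t
    refine hasDerivAt_tsum (y₀ := (0:ℝ))
      (u := fun j : ℕ => π / ((2 * (j:ℝ) + 1) ^ (1 + 1) * ((2 * (j:ℝ) + 1) ^ 2 + m ^ 2)))
      (g := fun (j : ℕ) t => Real.sin ((2 * (j:ℝ) + 1) * π * t) /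
        ((2 * (j:ℝ) + 1) ^ 3 * ((2 * (j:ℝ) + 1) ^ 2 + m ^ 2)))
      (g' := fun (j : ℕ) t => (π * Real.cos ((2 * (j:ℝ) + 1) * π * t)) /
        ((2 * (j:ℝ) + 1) ^ 2 * ((2 * (j:ℝ) + 1) ^ 2 + m ^ 2)))
      (sp_summ m 1 (fun _ => π) π habsS) (fun j t => ?_) (fun j t => ?_) ?_ t
    · refine (((hlin j t).sin).div_const _).congr_deriv ?_
      have := hb j
      field_simp
    · rw [Real.norm_eq_abs, abs_div, abs_mul, abs_of_pos hpi,
        abs_of_pos (a := (2 * (j:ℝ) + 1) ^ 2 * _) (by have := hb j; positivity)]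
      have := hb j
      gcongr
      nlinarith [Real.abs_cos_le_one ((2 * (j:ℝ) + 1) * π * t)]
    · simpa using summable_zero
  have hd2 : ∀ t, HasDerivAt k1 (-π ^ 2 * h t) t := by
    intro t
    have := hasDerivAt_tsum (y₀ := 0) (u := fun j : ℕ => π ^ 2 / ((2 * (j:ℝ) + 1) ^ (0 + 1) * ((2 * (j:ℝ) + 1) ^ 2 + m ^ 2)))
      (g := fun (j : ℕ) t => (π * Real.cos ((2 * (j:ℝ) + 1) * π * t)) /
        ((2 * (j:ℝ) + 1) ^ 2 * ((2 * (j:ℝ) + 1) ^ 2 + m ^ 2)))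
      (g' := fun (j : ℕ) t => -π ^ 2 * (Real.sin ((2 * (j:ℝ) + 1) * π * t) /
        ((2 * (j:ℝ) + 1) * ((2 * (j:ℝ) + 1) ^ 2 + m ^ 2))))
      (sp_summ m 0 (fun _ => π ^ 2) (π ^ 2) (fun j => by simp)) (fun j t => ?_) (fun j t => ?_) ?_ t
    · rw [tsum_mul_left] at this
      exact this
    · refine ((((hlin j t).cos).const_mul π).div_const _).congr_deriv ?_
      have := hb j
      field_simp
    · have := hb j
      rw [Real.norm_eq_abs, abs_mul, abs_div, abs_neg, abs_of_pos (a := π ^ 2) (by positivity),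
        abs_of_pos (a := (2 * (j:ℝ) + 1) * _) (by positivity), zero_add, pow_one, ← mul_div_assoc]
      gcongr
      have := Real.abs_sin_le_one ((2 * (j:ℝ) + 1) * π * t)
      nlinarith [sq_nonneg π]
    · exact sp_summ m 1 _ π (fun j => by simp [abs_of_pos hpi])
  have hrel : ∀ t ∈ Set.Icc (0:ℝ) 1, h t = π ^ 3 * t * (1 - t) / 8 - m ^ 2 * k t := by
    intro t ht
    rw [← sp_cubic t ht, hk, ← tsum_mul_left, ← Summable.tsum_sub]
    · refine tsum_congr fun j => ?_
      have := hb j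
      field_simp
      ring
    · refine Summable.of_norm_bounded (sp_odd_summable 3 (by norm_num)) fun j => ?_
      have := hb j
      rw [Real.norm_eq_abs, abs_div, abs_of_pos (a := (2 * (j:ℝ) + 1) ^ 3) (by positivity)]
      gcongr
      exact Real.abs_sin_le_one _
    · exact (sp_summ m 2 _ 1 (fun j => Real.abs_sin_le_one _)).mul_left _
  have hch : 0 < Real.cosh (m * π / 2) := Real.cosh_pos _
  have hlin2 : ∀ t : ℝ, HasDerivAt (fun t => m * π * (t - 1 / 2)) (m * π) t := by
    intro t
    exact (((hasDerivAt_id t).sub_const (1 / 2)).const_mul (m * π)).congr_deriv (mul_one _)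
  have key := sp_uniq
    (fun t => π ^ 3 * t * (1 - t) / 8 - m ^ 2 * k t -
      π / (4 * m ^ 2) * (1 - Real.cosh (m * π * (t - 1 / 2)) / Real.cosh (m * π / 2)))
    (fun t => π ^ 3 * (1 - 2 * t) / 8 - m ^ 2 * k1 t +
      π / (4 * m ^ 2) * (Real.sinh (m * π * (t - 1 / 2)) * (m * π) / Real.cosh (m * π / 2)))
    (fun t => - π ^ 3 / 4 - m ^ 2 * (-π ^ 2 * h t) +
      π / (4 * m ^ 2) * (Real.cosh (m * π * (t - 1 / 2)) * (m * π) * (m * π) / Real.cosh (m * π / 2)))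
    (m * π) ?_ ?_ ?_ ?_ ?_ t ht
  · rw [← hrel t ht] at key
    exact sub_eq_zero.1 key
  · intro t
    have a1 : HasDerivAt (fun t : ℝ => π ^ 3 * t * (1 - t) / 8) (π ^ 3 * (1 - 2 * t) / 8) t := by
      refine ((((hasDerivAt_id t).const_mul (π ^ 3)).mul ((hasDerivAt_id t).const_sub 1)).div_const 8).congr_deriv ?_
      simp
      ring
    have a2 := (((hlin2 t).cosh.div_const (Real.cosh (m * π / 2))).const_sub 1).const_mul (π / (4 * m ^ 2))
    refine ((a1.sub ((hd1 t).const_mul (m ^ 2))).sub a2).congr_deriv ?_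
    ring
  · intro t
    have a1 : HasDerivAt (fun t : ℝ => π ^ 3 * (1 - 2 * t) / 8) (- π ^ 3 / 4) t := by
      refine (((((hasDerivAt_id t).const_mul 2).const_sub 1).const_mul (π ^ 3)).div_const 8).congr_deriv ?_
      ring
    have a2 := (((hlin2 t).sinh.mul_const (m * π)).div_const (Real.cosh (m * π / 2))).const_mul (π / (4 * m ^ 2))
    exact (a1.sub ((hd2 t).const_mul (m ^ 2))).add a2
  · intro t ht
    rw [← hrel t ht]
    field_simp
    ring
  · have : k 0 = 0 := by simp [hk]
    simp only [this]
    rw [show m * π * (0 - 1 / 2) = -(m * π / 2) by ring, Real.cosh_neg, div_self hch.ne']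
    ring
  · have : k 1 = 0 := by
      rw [hk]
      simp only
      convert tsum_zero with j
      have : Real.sin ((2 * (j:ℝ) + 1) * π * 1) = 0 := by
        have := Real.sin_nat_mul_pi (2 * j + 1)
        push_cast at this
        simpa using this
      rw [this, zero_div]
    simp only [this]
    rw [show m * π * (1 - 1 / 2) = m * π / 2 by ring, div_self hch.ne']
    ring

/-- The holomorphic series. -/
noncomputable def spTerm (j : ℕ) (w : ℂ) : ℂ :=
  Complex.sin ((((2 * (j:ℝ) + 1) * π : ℝ) : ℂ) * w) / (((2 * (j:ℝ) + 1) ^ 3 * Real.cosh ((2 * (j:ℝ) + 1) * π / 2) : ℝ) : ℂ)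

theorem sp_norm_sin (z : ℂ) : ‖Complex.sin z‖ ≤ Real.exp |z.im| := by
  have h1 : ‖Complex.sin z‖ ≤ (Real.exp (z.im) + Real.exp (-z.im)) / 2 := by
    rw [Complex.sin, norm_div, norm_mul, Complex.norm_I, mul_one, Complex.norm_two]
    gcongr
    refine (norm_sub_le _ _).trans ?_
    simp [Complex.norm_exp]
  have := Real.exp_le_exp.2 (le_abs_self z.im)
  have := Real.exp_le_exp.2 (neg_le_abs z.im)
  linarith

theorem spTerm_bound (j : ℕ) (w : ℂ) (hw : |w.im| < 1 / 2) :
    ‖spTerm j w‖ ≤ 2 * (1 / (2 * (j:ℝ) + 1) ^ 3) := by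
  have hb : (0:ℝ) < 2 * (j:ℝ) + 1 := by positivity
  have hpi := Real.pi_pos
  have hch : 0 < Real.cosh ((2 * (j:ℝ) + 1) * π / 2) := Real.cosh_pos _
  have h1 := sp_norm_sin ((((2 * (j:ℝ) + 1) * π : ℝ) : ℂ) * w)
  rw [Complex.im_ofReal_mul, abs_mul, abs_of_pos (mul_pos hb hpi)] at h1
  have h2 : Real.exp ((2 * (j:ℝ) + 1) * π * |w.im|) ≤ 2 * Real.cosh ((2 * (j:ℝ) + 1) * π / 2) := by
    rw [Real.cosh_eq]
    have : Real.exp ((2 * (j:ℝ) + 1) * π * |w.im|) ≤ Real.exp ((2 * (j:ℝ) + 1) * π / 2) := by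
      apply Real.exp_le_exp.2
      nlinarith [mul_pos hb hpi]
    have := Real.exp_pos (-((2 * (j:ℝ) + 1) * π / 2))
    linarith
  rw [spTerm, norm_div, Complex.norm_real, Real.norm_eq_abs, abs_of_pos (by positivity), div_le_iff₀ (by positivity)]
  refine (h1.trans h2).trans (le_of_eq ?_)
  field_simp

theorem sp_strip_open : IsOpen {w : ℂ | |w.im| < 1 / 2} :=
  isOpen_lt (Complex.continuous_im.abs) continuous_const

theorem spTerm_diff : DifferentiableOn ℂ (fun w => ∑' j, spTerm j w) {w : ℂ | |w.im| < 1 / 2} := by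
  refine Complex.differentiableOn_tsum_of_summable_norm ((sp_odd_summable 3 (by norm_num)).mul_left 2) ?_ sp_strip_open (fun j w hw => spTerm_bound j w hw)
  intro j
  unfold spTerm
  fun_prop

theorem spTerm_re (j : ℕ) (s τ : ℝ) : (spTerm j ((s : ℂ) + (τ : ℂ) * Complex.I)).re =
    Real.sin ((2 * (j:ℝ) + 1) * π * s) * Real.cosh ((2 * (j:ℝ) + 1) * π * τ) /
      ((2 * (j:ℝ) + 1) ^ 3 * Real.cosh ((2 * (j:ℝ) + 1) * π / 2)) := by
  rw [spTerm, Complex.div_ofReal_re]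
  congr 1
  rw [mul_add, ← mul_assoc, ← Complex.ofReal_mul, ← Complex.ofReal_mul, Complex.sin_add_mul_I]
  simp [← Complex.ofReal_sin, ← Complex.ofReal_cos, ← Complex.ofReal_sinh, ← Complex.ofReal_cosh, -Complex.ofReal_mul]

theorem sp_formula (L : ℝ) (hL : 0 < L) (ω ρ : ℝ) (z : ℝ × ℝ)
    (hx₁ : -L / 2 < z.1) (hx₂ : z.1 < L / 2) (hy₁ : -L / 2 < z.2) (hy₂ : z.2 < L / 2) :
    squarePatchPressure L ω ρ z = (-ρ * ω ^ 2) * (L ^ 2 / 4 - z.1 ^ 2) +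
      (8 * ρ * ω ^ 2 * L ^ 2 / π ^ 3) * (∑' j, spTerm j ((((z.1 + L / 2) / L : ℝ) : ℂ) + ((z.2 / L : ℝ) : ℂ) * Complex.I)).re := by
  have hb : ∀ j : ℕ, (0:ℝ) < 2 * (j:ℝ) + 1 := fun j => by positivity
  have hpi := Real.pi_pos
  obtain ⟨s, hs⟩ : ∃ s, s = (z.1 + L / 2) / L := ⟨_, rfl⟩
  obtain ⟨τ, hτ⟩ : ∃ τ, τ = z.2 / L := ⟨_, rfl⟩
  have hz1 : z.1 = L * s - L / 2 := by rw [hs]; field_simp; ring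
  have hz2 : z.2 = L * τ := by rw [hτ]; field_simp
  have hs0 : 0 < s := by rw [hs]; apply div_pos _ hL; linarith
  have hs1 : s < 1 := by rw [hs, div_lt_one hL]; linarith
  have ht0 : -(1 / 2) < τ := by rw [hτ, lt_div_iff₀ hL]; linarith
  have ht1 : τ < 1 / 2 := by rw [hτ, div_lt_iff₀ hL]; linarith
  have hstrip : |(((s : ℝ) : ℂ) + ((τ : ℝ) : ℂ) * Complex.I).im| < 1 / 2 := by
    simpa [abs_lt] using And.intro (by linarith : -2⁻¹ < τ) (by linarith : τ < 2⁻¹)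
  have hsum : Summable fun j => spTerm j (((s : ℝ) : ℂ) + ((τ : ℝ) : ℂ) * Complex.I) :=
    Summable.of_norm_bounded ((sp_odd_summable 3 (by norm_num)).mul_left 2) (fun j => spTerm_bound j _ hstrip)
  have hsumre := (Complex.hasSum_re hsum.hasSum)
  rw [← hs, ← hτ, ← hsumre.tsum_eq]
  have hterm : ∀ jk : ℕ × ℕ, (-32 * ω ^ 2 / ((2 * (jk.1 : ℝ) + 1) * (2 * (jk.2 : ℝ) + 1) * π ^ 2))
      / (((2 * (jk.2 : ℝ) + 1) * π / L) ^ 2 + ((2 * (jk.1 : ℝ) + 1) * π / L) ^ 2)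
      * Real.sin ((2 * (jk.1 : ℝ) + 1) * π * (z.1 + L / 2) / L)
      * Real.sin ((2 * (jk.2 : ℝ) + 1) * π * (z.2 + L / 2) / L) =
      (-32 * ω ^ 2 * L ^ 2 / π ^ 4) * (Real.sin ((2 * (jk.1 : ℝ) + 1) * π * s) / (2 * (jk.1 : ℝ) + 1) *
       (Real.sin ((2 * (jk.2 : ℝ) + 1) * π * (τ + 1 / 2)) / ((2 * (jk.2 : ℝ) + 1) * ((2 * (jk.2 : ℝ) + 1) ^ 2 + (2 * (jk.1 : ℝ) + 1) ^ 2)))) := by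
    intro jk
    have h1 := hb jk.1
    have h2 := hb jk.2
    rw [show (2 * (jk.1 : ℝ) + 1) * π * (z.1 + L / 2) / L = (2 * (jk.1 : ℝ) + 1) * π * s by
        rw [hz1]; field_simp; ring,
      show (2 * (jk.2 : ℝ) + 1) * π * (z.2 + L / 2) / L = (2 * (jk.2 : ℝ) + 1) * π * (τ + 1 / 2) by
        rw [hz2]; field_simp]
    generalize Real.sin _ = A
    generalize Real.sin _ = B
    field_simp
  rw [squarePatchPressure, tsum_congr hterm, tsum_mul_left, Summable.tsum_prod]
  · simp only [tsum_mul_left]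
    have hin : ∀ j : ℕ, Real.sin ((2 * (j : ℝ) + 1) * π * s) / (2 * (j : ℝ) + 1) *
       (∑' k : ℕ, Real.sin ((2 * (k : ℝ) + 1) * π * (τ + 1 / 2)) / ((2 * (k : ℝ) + 1) * ((2 * (k : ℝ) + 1) ^ 2 + (2 * (j : ℝ) + 1) ^ 2)))
       = π / 4 * (Real.sin ((2 * (j:ℝ) + 1) * π * s) / (2 * (j:ℝ) + 1) ^ 3 - (spTerm j ((s : ℂ) + (τ : ℂ) * Complex.I)).re) := by
      intro j
      have h1 := hb j
      have hch : 0 < Real.cosh ((2 * (j:ℝ) + 1) * π / 2) := Real.cosh_pos _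
      rw [sp_h _ h1 _ ⟨by linarith, by linarith⟩, spTerm_re, add_sub_cancel_right]
      field_simp
    rw [tsum_congr hin, tsum_mul_left, Summable.tsum_sub _ hsumre.summable, sp_cubic s ⟨hs0.le, hs1.le⟩, hz1]
    · field_simp
      ring
    · refine Summable.of_norm_bounded (sp_odd_summable 3 (by norm_num)) fun j => ?_
      have := hb j
      rw [Real.norm_eq_abs, abs_div, abs_of_pos (a := (2 * (j:ℝ) + 1) ^ 3) (by positivity)]
      gcongr
      exact Real.abs_sin_le_one _
  · have h2 := sp_odd_summable 2 (by norm_num)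
    refine Summable.of_norm_bounded (h2.mul_of_nonneg h2 (fun j => by positivity) (fun j => by positivity)) fun jk => ?_
    have h1 := hb jk.1
    have h2 := hb jk.2
    rw [Real.norm_eq_abs, abs_mul, abs_div, abs_div, abs_of_pos h1, abs_of_pos (a := (2 * (jk.2:ℝ) + 1) * _) (by positivity),
      div_mul_div_comm, div_mul_div_comm, one_mul]
    have e1 := Real.abs_sin_le_one ((2 * (jk.1 : ℝ) + 1) * π * s)
    have e2 := Real.abs_sin_le_one ((2 * (jk.2 : ℝ) + 1) * π * (τ + 1 / 2))
    apply div_le_div₀ zero_le_one _ (by positivity)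
    · generalize 2 * (jk.1 : ℝ) + 1 = a at *
      generalize 2 * (jk.2 : ℝ) + 1 = b at *
      have : a * b ≤ b ^ 2 + a ^ 2 := by nlinarith [sq_nonneg (a - b)]
      nlinarith [mul_pos h1 h2]
    · exact mul_le_one₀ e1 (abs_nonneg _) e2

theorem squarePatchPressure_laplacian (L : ℝ) (hL : 0 < L) (ω ρ : ℝ)
    (x y : ℝ) (hx₁ : -L / 2 < x) (hx₂ : x < L / 2) (hy₁ : -L / 2 < y) (hy₂ : y < L / 2) :
    DifferentiableAt ℝ (squarePatchPressure L ω ρ) (x, y) ∧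
    DifferentiableAt ℝ (fderiv ℝ (squarePatchPressure L ω ρ)) (x, y) ∧
    fderiv ℝ (fun z => fderiv ℝ (squarePatchPressure L ω ρ) z (1, 0)) (x, y) (1, 0)
      + fderiv ℝ (fun z => fderiv ℝ (squarePatchPressure L ω ρ) z (0, 1)) (x, y) (0, 1)
      = 2 * ρ * ω ^ 2 := by
  rw [show 2 * ρ * ω ^ 2 = -2 * (-ρ * ω ^ 2) by ring]
  refine sp_deriv (fun w => ∑' j, spTerm j w) L (-ρ * ω ^ 2) (8 * ρ * ω ^ 2 * L ^ 2 / π ^ 3) x y _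
    (Set.Ioo (-L / 2) (L / 2) ×ˢ Set.Ioo (-L / 2) (L / 2)) (isOpen_Ioo.prod isOpen_Ioo)
    ⟨⟨hx₁, hx₂⟩, ⟨hy₁, hy₂⟩⟩ hL.ne' {w : ℂ | |w.im| < 1 / 2} sp_strip_open spTerm_diff ?_ ?_
  · rintro z ⟨-, h1, h2⟩
    have ht0 : -(1 / 2) < z.2 / L := by rw [lt_div_iff₀ hL]; linarith
    have ht1 : z.2 / L < 1 / 2 := by rw [div_lt_iff₀ hL]; linarith
    rw [Set.mem_setOf_eq, abs_lt, Complex.add_im, Complex.ofReal_im, Complex.im_ofReal_mul, Complex.I_im,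
      mul_one, zero_add]
    exact ⟨ht0, ht1⟩
  · rintro z ⟨⟨h1, h2⟩, h3, h4⟩
    exact sp_formula L hL ω ρ z h1 h2 h3 h4
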